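/- Two-scale Gronwall lemma (abstract form of the paper's Lemma 4.2): Let K > 0, κ ∈ (0,1), and c ∈ (0, 1/K). Let N : [0,∞) → ℝ be nonnegative and integrable and set A = ∫₀^∞ N(s) ds and ε₀ = ((κK/2)·e^{−KA})^{1/(1−cK)}. Let ε satisfy 0 < ε ≤ ε₀ and ε < 1, and set t_ε = c·ε·ln(1/ε). Let r : [0,∞) → ℝ be nonnegative and integrable with R := ∫₀^∞ r(s) ds ≤ (κ/2)·(ε^{1+cK}/K)·e^{−KA}. Let φ : [0, t_ε] → ℝ be continuous and nonnegative with φ(0) = 0, differentiable on (0, t_ε), and assume: for every t ∈ (0, t_ε) such that φ(s) ≤ κ for all s ∈ [0, t], one has ε·φ'(t) ≤ K·((1 + N(t/ε))·φ(t) + t + r(t)). Then sup_{t ∈ [0, t_ε]} φ(t) ≤ (ε^{1−cK}/K + K·R·ε^{−1−cK})·e^{KA}; in particular φ(t) ≤ κ for all t ∈ [0, t_ε]. -/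

import Mathlib

open Set MeasureTheory

/-!
Grönwall's inequality with the integrable rate `K / ε * (1 + N (t / ε))` produces the growth factor
`exp (K * T / ε + K * A)`: rescaling time turns `∫ N (t / ε) / ε` into `∫ N`, so the singular rate
`N (t / ε) / ε` costs only a constant, while the rate `K / ε` over the time `c * ε * log (1 / ε)`
costs `ε ^ (-(c * K))`. The forcing `K / ε * (t + r t)`, discounted by `exp (-K * t / ε)`,
contributes strictly less than `ε / K + K * R / ε`. This strictness closes the bootstrap: as long as
`φ < κ` in the past, the estimate applies and the smallness of `ε` and `R` turns it into `φ < κ`.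
-/

section ContinuousInduction

variable {α β : Type*} [LinearOrder α] [TopologicalSpace α] [OrderClosedTopology α]
  [LinearOrder β] [TopologicalSpace β] [OrderClosedTopology β]

theorem forall_lt_of_forall_lt_of_isCompact {s : Set α} {f : α → β} {κ : β} (hs : IsCompact s)
    (hf : ContinuousOn f s) (h : ∀ t ∈ s, (∀ x ∈ s, x < t → f x < κ) → f t < κ) :
    ∀ t ∈ s, f t < κ := by
  by_contra! hexceeds
  have hcompact : IsCompact {t ∈ s | κ ≤ f t} :=
    hs.of_isClosed_subset (hs.isClosed.isClosed_le continuousOn_const hf) (sep_subset _ _)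
  obtain ⟨t, ⟨hts, hκt⟩, hleast⟩ := hcompact.exists_isLeast hexceeds
  refine (h t hts fun x hxs hxt => ?_).not_ge hκt
  by_contra! hκx
  exact (hleast ⟨hxs, hκx⟩).not_gt hxt

end ContinuousInduction

section AbsolutelyContinuous

theorem absolutelyContinuousOnInterval_comp_of_locallyLipschitz {E X : Type*}
    [SeminormedAddCommGroup E] [PseudoMetricSpace X] {g : E → X} {f : ℝ → E} {a b : ℝ}
    (hg : LocallyLipschitz g) (hf : AbsolutelyContinuousOnInterval f a b) :
    AbsolutelyContinuousOnInterval (fun t => g (f t)) a b := by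
  obtain ⟨C, hC⟩ := hg.locallyLipschitzOn.exists_lipschitzOnWith_of_compact
    (isCompact_uIcc.image_of_continuousOn hf.continuousOn)
  refine squeeze_zero' (.of_forall fun I => Finset.sum_nonneg fun i _ => dist_nonneg)
    (Filter.eventually_inf_principal.mpr (.of_forall fun I hI => ?_))
    (by simpa using Filter.Tendsto.const_mul (C : ℝ) hf)
  rw [Finset.mul_sum]
  exact Finset.sum_le_sum fun i hi => hC.dist_le_mul _ (mem_image_of_mem f (hI.1 i hi).1) _
    (mem_image_of_mem f (hI.1 i hi).2)

theorem absolutelyContinuousOnInterval_exp_neg_intervalIntegral {α : ℝ → ℝ} {a b : ℝ}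
    (hα : IntervalIntegrable α volume a b) :
    AbsolutelyContinuousOnInterval (fun t => Real.exp (-∫ s in a..t, α s)) a b :=
  absolutelyContinuousOnInterval_comp_of_locallyLipschitz Real.contDiff_exp.locallyLipschitz
    (hα.absolutelyContinuousOnInterval_intervalIntegral left_mem_uIcc).fun_neg

theorem sub_le_integral_of_absolutelyContinuousOnInterval {f g : ℝ → ℝ} {a b : ℝ} (hab : a ≤ b)
    (hf : AbsolutelyContinuousOnInterval f a b) (hg : IntervalIntegrable g volume a b)
    (hfg : ∀ᵐ t, t ∈ Icc a b → deriv f t ≤ g t) :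
    f b - f a ≤ ∫ t in a..b, g t := by
  rw [← hf.integral_deriv_eq_sub]
  exact intervalIntegral.integral_mono_ae_restrict hab hf.intervalIntegrable_deriv hg
    ((ae_restrict_iff' measurableSet_Icc).mpr hfg)

end AbsolutelyContinuous

section Gronwall

variable {u u' α β : ℝ → ℝ} {a b C : ℝ}

theorem le_exp_integral_mul_of_le_integral (hab : a ≤ b) (hα : IntervalIntegrable α volume a b)
    (hβ : IntervalIntegrable β volume a b)
    (hαu : IntervalIntegrable (fun t => α t * u t) volume a b)
    (hα0 : ∀ t ∈ Icc a b, 0 ≤ α t)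
    (hu : ∀ t ∈ Icc a b, u t ≤ C + ∫ s in a..t, (α s * u s + β s)) :
    u b ≤ Real.exp (∫ t in a..b, α t) *
      (C + ∫ t in a..b, Real.exp (-∫ s in a..t, α s) * β t) := by
  set w : ℝ → ℝ := fun t => C + ∫ s in a..t, (α s * u s + β s) with hw
  set E : ℝ → ℝ := fun t => Real.exp (-∫ s in a..t, α s) with hE
  have hrate : IntervalIntegrable (fun t => α t * u t + β t) volume a b := hαu.add hβ
  have hE_ac : AbsolutelyContinuousOnInterval E a b :=
    absolutelyContinuousOnInterval_exp_neg_intervalIntegral hα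
  have hw_ac : AbsolutelyContinuousOnInterval w a b :=
    (LipschitzWith.const C).lipschitzOnWith.absolutelyContinuousOnInterval.fun_add
      (hrate.absolutelyContinuousOnInterval_intervalIntegral left_mem_uIcc)
  have hderiv : ∀ᵐ t, t ∈ Icc a b → deriv (fun t => E t * w t) t ≤ E t * β t := by
    filter_upwards [hα.ae_hasDerivAt_integral, hrate.ae_hasDerivAt_integral] with t hαt hwt ht
    have ht' : t ∈ uIcc a b := Icc_subset_uIcc ht
    have hEw := (hαt ht' a left_mem_uIcc).fun_neg.exp.fun_mul
      ((hwt ht' a left_mem_uIcc).const_add C)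
    have hloss : 0 ≤ E t * (α t * (w t - u t)) :=
      mul_nonneg (Real.exp_nonneg _) (mul_nonneg (hα0 t ht) (sub_nonneg.mpr (hu t ht)))
    rw [hEw.deriv]
    linarith
  have hgrowth : E b * w b - E a * w a ≤ ∫ t in a..b, E t * β t :=
    sub_le_integral_of_absolutelyContinuousOnInterval hab (hE_ac.fun_mul hw_ac)
      (hβ.continuousOn_mul hE_ac.continuousOn) hderiv
  have hEa : E a * w a = C := by simp [hE, hw]
  calc u b ≤ w b := hu b (right_mem_Icc.mpr hab)
    _ = Real.exp (∫ t in a..b, α t) * (E b * w b) := by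
      rw [← mul_assoc, hE, ← Real.exp_add, add_neg_cancel, Real.exp_zero, one_mul]
    _ ≤ _ := by gcongr; linarith

theorem le_exp_integral_mul_of_deriv_right_le (hab : a ≤ b)
    (hα : IntervalIntegrable α volume a b) (hβ : IntervalIntegrable β volume a b)
    (hα0 : ∀ t ∈ Icc a b, 0 ≤ α t) (hu : ContinuousOn u (Icc a b))
    (hu' : ∀ t ∈ Ioo a b, HasDerivWithinAt u (u' t) (Ioi t) t)
    (hle : ∀ t ∈ Ioo a b, u' t ≤ α t * u t + β t) :
    u b ≤ Real.exp (∫ t in a..b, α t) *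
      (u a + ∫ t in a..b, Real.exp (-∫ s in a..t, α s) * β t) := by
  have hαu : IntervalIntegrable (fun t => α t * u t) volume a b :=
    hα.mul_continuousOn (by rwa [uIcc_of_le hab])
  have hrate : IntegrableOn (fun t => α t * u t + β t) (Icc a b) :=
    (intervalIntegrable_iff_integrableOn_Icc_of_le hab).mp (hαu.add hβ)
  refine le_exp_integral_mul_of_le_integral hab hα hβ hαu hα0 fun t ht => ?_
  have hIcc : Icc a t ⊆ Icc a b := Icc_subset_Icc_right ht.2
  have hIoo : Ioo a t ⊆ Ioo a b := Ioo_subset_Ioo_right ht.2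
  exact sub_le_iff_le_add'.mp <| intervalIntegral.sub_le_integral_of_hasDeriv_right_of_le ht.1
    (hu.mono hIcc) (fun s hs => hu' s (hIoo hs)) (hrate.mono_set hIcc) fun s hs => hle s (hIoo hs)

theorem le_exp_const_add_integral_mul_of_deriv_right_le {k : ℝ} {m : ℝ → ℝ} (hab : a ≤ b)
    (hk : 0 ≤ k) (hm : IntervalIntegrable m volume a b) (hβ : IntervalIntegrable β volume a b)
    (hm0 : ∀ t ∈ Icc a b, 0 ≤ m t) (hβ0 : ∀ t ∈ Icc a b, 0 ≤ β t)
    (hu : ContinuousOn u (Icc a b))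
    (hu' : ∀ t ∈ Ioo a b, HasDerivWithinAt u (u' t) (Ioi t) t)
    (hle : ∀ t ∈ Ioo a b, u' t ≤ (k + m t) * u t + β t) :
    u b ≤ Real.exp (k * (b - a) + ∫ t in a..b, m t) *
      (u a + ∫ t in a..b, Real.exp (-(k * (t - a))) * β t) := by
  have hrate : IntervalIntegrable (fun t => k + m t) volume a b :=
    intervalIntegrable_const.add hm
  have hprimitive : ∀ t ∈ Icc a b,
      ∫ s in a..t, (k + m s) = k * (t - a) + ∫ s in a..t, m s := fun t ht => by
    rw [intervalIntegral.integral_add intervalIntegrable_const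
      (hm.mono_set (uIcc_subset_uIcc_left (Icc_subset_uIcc ht))),
      intervalIntegral.integral_const, smul_eq_mul, mul_comm]
  have hdiscount : ∫ t in a..b, Real.exp (-∫ s in a..t, (k + m s)) * β t ≤
      ∫ t in a..b, Real.exp (-(k * (t - a))) * β t := by
    refine intervalIntegral.integral_mono_on hab ?_ ?_ fun t ht => ?_
    · exact hβ.continuousOn_mul
        (absolutelyContinuousOnInterval_exp_neg_intervalIntegral hrate).continuousOn
    · exact hβ.continuousOn_mul (by fun_prop)
    · have hmt : 0 ≤ ∫ s in a..t, m s :=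
        intervalIntegral.integral_nonneg ht.1 fun s hs => hm0 s ⟨hs.1, hs.2.trans ht.2⟩
      have := hβ0 t ht
      gcongr
      linarith [hprimitive t ht]
  rw [← hprimitive b (right_mem_Icc.mpr hab)]
  calc u b ≤ _ := le_exp_integral_mul_of_deriv_right_le hab hrate hβ
        (fun t ht => add_nonneg hk (hm0 t ht)) hu hu' hle
    _ ≤ _ := by gcongr

end Gronwall

theorem integral_exp_neg_mul_mul_id {k : ℝ} (hk : k ≠ 0) (T : ℝ) :
    ∫ t in 0..T, Real.exp (-(k * t)) * t = (1 - (1 + k * T) * Real.exp (-(k * T))) / k ^ 2 := by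
  have hprimitive : ∀ t, HasDerivAt (fun t => -((1 + k * t) * Real.exp (-(k * t))) / k ^ 2)
      (Real.exp (-(k * t)) * t) t := fun t => by
    have hlin : HasDerivAt (fun t => k * t) k t := by simpa using (hasDerivAt_id t).const_mul k
    refine (((hlin.const_add 1).fun_mul hlin.fun_neg.exp).fun_neg.div_const (k ^ 2)).congr_deriv ?_
    field_simp
    ring
  rw [intervalIntegral.integral_eq_sub_of_hasDerivAt (fun t _ => hprimitive t)
    (Continuous.intervalIntegrable (by fun_prop) 0 T)]
  simp only [mul_zero, add_zero, neg_zero, Real.exp_zero]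
  ring

theorem integral_exp_neg_mul_mul_id_add_lt {k T : ℝ} {r : ℝ → ℝ} (hk : 0 < k) (hT : 0 ≤ T)
    (hr : IntervalIntegrable r volume 0 T) (hr0 : ∀ t ∈ Icc 0 T, 0 ≤ r t) :
    ∫ t in 0..T, Real.exp (-(k * t)) * (t + r t) < 1 / k ^ 2 + ∫ t in 0..T, r t := by
  have hdiscounted : IntervalIntegrable (fun t => Real.exp (-(k * t)) * r t) volume 0 T :=
    hr.continuousOn_mul (by fun_prop)
  have hlinear : ∫ t in 0..T, Real.exp (-(k * t)) * t < 1 / k ^ 2 := by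
    rw [integral_exp_neg_mul_mul_id hk.ne']
    gcongr
    exact sub_lt_self _ (by positivity)
  have hremainder : ∫ t in 0..T, Real.exp (-(k * t)) * r t ≤ ∫ t in 0..T, r t :=
    intervalIntegral.integral_mono_on hT hdiscounted hr fun t ht =>
      mul_le_of_le_one_left (hr0 t ht)
        (Real.exp_le_one_iff.mpr (neg_nonpos.mpr (mul_nonneg hk.le ht.1)))
  simp_rw [mul_add]
  rw [intervalIntegral.integral_add (Continuous.intervalIntegrable (by fun_prop) 0 T) hdiscounted]
  exact add_lt_add_of_lt_of_le hlinear hremainder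

theorem intervalIntegral_le_setIntegral_Ici {f : ℝ → ℝ} {a b : ℝ} (hab : a ≤ b)
    (hf : IntegrableOn f (Ici a)) (hf0 : ∀ t, a ≤ t → 0 ≤ f t) :
    ∫ t in a..b, f t ≤ ∫ t in Ici a, f t := by
  rw [intervalIntegral.integral_of_le hab]
  exact setIntegral_mono_set hf ((ae_restrict_iff' measurableSet_Ici).mpr (.of_forall hf0))
    (Ioc_subset_Icc_self.trans Icc_subset_Ici_self).eventuallyLE

section TwoScale

variable {K κ c ε T A R : ℝ} {N r φ φ' : ℝ → ℝ}

theorem lt_of_two_scale_deriv_right_le (hK : 0 < K) (hε : 0 < ε) (hT : 0 ≤ T)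
    (hN : IntervalIntegrable N volume 0 (T / ε)) (hN0 : ∀ s ∈ Icc 0 (T / ε), 0 ≤ N s)
    (hr : IntervalIntegrable r volume 0 T) (hr0 : ∀ t ∈ Icc 0 T, 0 ≤ r t)
    (hφ : ContinuousOn φ (Icc 0 T)) (hφ0 : φ 0 ≤ 0)
    (hφ' : ∀ t ∈ Ioo 0 T, HasDerivWithinAt φ (φ' t) (Ioi t) t)
    (hle : ∀ t ∈ Ioo 0 T, ε * φ' t ≤ K * ((1 + N (t / ε)) * φ t + t + r t)) :
    φ T < Real.exp (K * T / ε + K * ∫ s in 0..T / ε, N s) *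
      (ε / K + K / ε * ∫ t in 0..T, r t) := by
  have hk : 0 < K / ε := div_pos hK hε
  have hrescaled : IntervalIntegrable (fun t => K / ε * N (t / ε)) volume 0 T := by
    simpa [div_eq_inv_mul, hε.ne'] using (hN.comp_mul_left (c := ε⁻¹)).const_mul (K / ε)
  have hcost : ∫ t in 0..T, K / ε * N (t / ε) = K * ∫ s in 0..T / ε, N s := by
    rw [intervalIntegral.integral_const_mul, intervalIntegral.integral_comp_div _ hε.ne', zero_div,
      smul_eq_mul, ← mul_assoc, div_mul_cancel₀ K hε.ne']
  have hgronwall := le_exp_const_add_integral_mul_of_deriv_right_le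
    (β := fun t => K / ε * (t + r t)) hT hk.le hrescaled
    ((intervalIntegral.intervalIntegrable_id.add hr).const_mul _)
    (fun t ht => mul_nonneg hk.le (hN0 _ ⟨by have := ht.1; positivity, by gcongr; exact ht.2⟩))
    (fun t ht => mul_nonneg hk.le (add_nonneg ht.1 (hr0 t ht))) hφ hφ' fun t ht => by
      rw [← mul_le_mul_iff_right₀ hε]
      refine (hle t ht).trans_eq ?_
      field_simp
      ring
  have hforcing := integral_exp_neg_mul_mul_id_add_lt hk hT hr hr0
  simp only [sub_zero, hcost, mul_left_comm _ (K / ε),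
    intervalIntegral.integral_const_mul] at hgronwall
  calc φ T ≤ _ := hgronwall
    _ < Real.exp (K / ε * T + K * ∫ s in 0..T / ε, N s) *
        (0 + K / ε * (1 / (K / ε) ^ 2 + ∫ t in 0..T, r t)) :=
      mul_lt_mul_of_pos_left (add_lt_add_of_le_of_lt hφ0 (mul_lt_mul_of_pos_left hforcing hk))
        (Real.exp_pos _)
    _ = _ := by
      rw [div_mul_eq_mul_div]
      congr 1
      field_simp
      ring

theorem exp_mul_log_one_div (hε : 0 < ε) :
    Real.exp (c * Real.log (1 / ε)) = ε ^ (-c) := by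
  rw [Real.rpow_def_of_pos hε, one_div, Real.log_inv, mul_neg, mul_neg, mul_comm]

theorem rpow_neg_mul_div_add_div_mul (hε : 0 < ε) (p : ℝ) :
    ε ^ (-p) * (ε / K + K / ε * R) = ε ^ (1 - p) / K + K * R * ε ^ (-1 - p) := by
  rw [sub_eq_add_neg, sub_eq_add_neg, Real.rpow_add hε, Real.rpow_add hε, Real.rpow_one,
    Real.rpow_neg_one]
  ring

theorem lt_two_scale_bound_of_deriv_right_le (hK : 0 < K) (hε : 0 < ε) (hT : 0 ≤ T)
    (hTε : T ≤ c * ε * Real.log (1 / ε))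
    (hN : IntegrableOn N (Ici 0)) (hN0 : ∀ s, 0 ≤ s → 0 ≤ N s)
    (hr : IntegrableOn r (Ici 0)) (hr0 : ∀ t, 0 ≤ t → 0 ≤ r t)
    (hφ : ContinuousOn φ (Icc 0 T)) (hφ0 : φ 0 ≤ 0)
    (hφ' : ∀ t ∈ Ioo 0 T, HasDerivWithinAt φ (φ' t) (Ioi t) t)
    (hle : ∀ t ∈ Ioo 0 T, ε * φ' t ≤ K * ((1 + N (t / ε)) * φ t + t + r t)) :
    φ T < (ε ^ (1 - c * K) / K + K * (∫ t in Ici 0, r t) * ε ^ (-1 - c * K)) *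
      Real.exp (K * ∫ s in Ici 0, N s) := by
  have hTdiv : 0 ≤ T / ε := div_nonneg hT hε.le
  have hexponent : K * T / ε ≤ c * K * Real.log (1 / ε) := by
    rw [div_le_iff₀ hε]
    linarith [mul_le_mul_of_nonneg_left hTε hK.le]
  have hNT := intervalIntegral_le_setIntegral_Ici hTdiv hN hN0
  have hrT := intervalIntegral_le_setIntegral_Ici hT hr hr0
  have hr_nonneg : 0 ≤ ∫ t in 0..T, r t :=
    intervalIntegral.integral_nonneg hT fun t ht => hr0 t ht.1
  calc φ T < Real.exp (K * T / ε + K * ∫ s in 0..T / ε, N s) *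
        (ε / K + K / ε * ∫ t in 0..T, r t) :=
      lt_of_two_scale_deriv_right_le hK hε hT
        (hN.mono_set (by simpa [uIcc_of_le hTdiv] using Icc_subset_Ici_self)).intervalIntegrable
        (fun s hs => hN0 s hs.1)
        (hr.mono_set (by simpa [uIcc_of_le hT] using Icc_subset_Ici_self)).intervalIntegrable
        (fun t ht => hr0 t ht.1) hφ hφ0 hφ' hle
    _ ≤ Real.exp (c * K * Real.log (1 / ε) + K * ∫ s in Ici 0, N s) *
        (ε / K + K / ε * ∫ t in Ici 0, r t) := by gcongr
    _ = _ := by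
      rw [Real.exp_add, exp_mul_log_one_div hε, mul_right_comm, rpow_neg_mul_div_add_div_mul hε]

theorem two_scale_bound_le (hK : 0 < K) (hκ : 0 < κ) (hcK : c * K < 1) (hε : 0 < ε)
    (hε₀ : ε ≤ (κ * K / 2 * Real.exp (-K * A)) ^ (1 / (1 - c * K)))
    (hR : R ≤ κ / 2 * (ε ^ (1 + c * K) / K) * Real.exp (-K * A)) :
    (ε ^ (1 - c * K) / K + K * R * ε ^ (-1 - c * K)) * Real.exp (K * A) ≤ κ := by
  have hp : 0 < 1 - c * K := sub_pos.mpr hcK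
  have hεp : ε ^ (1 - c * K) ≤ κ * K / 2 * Real.exp (-K * A) := by
    rwa [one_div, Real.le_rpow_inv_iff_of_pos hε.le (by positivity) hp] at hε₀
  have hexp : Real.exp (-K * A) * Real.exp (K * A) = 1 := by
    rw [← Real.exp_add, neg_mul, neg_add_cancel, Real.exp_zero]
  have hpow : ε ^ (1 + c * K) * ε ^ (-1 - c * K) = 1 := by
    rw [← Real.rpow_add hε, ← neg_add', add_neg_cancel, Real.rpow_zero]
  calc _ ≤ (κ * K / 2 * Real.exp (-K * A) / K +
          K * (κ / 2 * (ε ^ (1 + c * K) / K) * Real.exp (-K * A)) * ε ^ (-1 - c * K)) *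
        Real.exp (K * A) := by gcongr
    _ = (κ / 2 + κ / 2 * (ε ^ (1 + c * K) * ε ^ (-1 - c * K))) *
        (Real.exp (-K * A) * Real.exp (K * A)) := by field_simp
    _ = κ := by rw [hexp, hpow]; ring

end TwoScale

theorem two_scale_gronwall_general
    (K κ c : ℝ) (hK : 0 < K) (hκ : 0 < κ) (hc : c < 1 / K)
    (N : ℝ → ℝ) (hN0 : ∀ s, 0 ≤ s → 0 ≤ N s) (hN : IntegrableOn N (Ici 0))
    (A : ℝ) (hA : A = ∫ s in Ici (0 : ℝ), N s)
    (ε : ℝ) (hε : 0 < ε)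
    (hε₀ : ε ≤ (κ * K / 2 * Real.exp (-K * A)) ^ (1 / (1 - c * K)))
    (r : ℝ → ℝ) (hr0 : ∀ t, 0 ≤ t → 0 ≤ r t) (hr : IntegrableOn r (Ici 0))
    (R : ℝ) (hR : R = ∫ t in Ici (0 : ℝ), r t)
    (hRsmall : R ≤ κ / 2 * (ε ^ (1 + c * K) / K) * Real.exp (-K * A))
    (tε : ℝ) (htε : tε = c * ε * Real.log (1 / ε)) (φ φ' : ℝ → ℝ)
    (hφ : ContinuousOn φ (Icc 0 tε)) (hφ0 : φ 0 ≤ 0)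
    (hφ' : ∀ t ∈ Ioo 0 tε, HasDerivWithinAt φ (φ' t) (Ioi t) t)
    (hle : ∀ t ∈ Ioo 0 tε, (∀ s ∈ Icc 0 t, φ s ≤ κ) →
      ε * φ' t ≤ K * ((1 + N (t / ε)) * φ t + t + r t)) :
    (∀ t ∈ Icc 0 tε,
        φ t < (ε ^ (1 - c * K) / K + K * R * ε ^ (-1 - c * K)) * Real.exp (K * A))
      ∧ ∀ t ∈ Icc 0 tε, φ t < κ := by
  have hcK : c * K < 1 := (lt_div_iff₀ hK).mp hc
  have hbound : ∀ T ∈ Icc 0 tε,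
      (∀ t ∈ Ioo 0 T, ε * φ' t ≤ K * ((1 + N (t / ε)) * φ t + t + r t)) →
      φ T < (ε ^ (1 - c * K) / K + K * R * ε ^ (-1 - c * K)) * Real.exp (K * A) := by
    intro T ⟨hT0, hTε⟩ hleT
    rw [hA, hR]
    exact lt_two_scale_bound_of_deriv_right_le hK hε hT0 (hTε.trans_eq htε) hN hN0 hr hr0
      (hφ.mono (Icc_subset_Icc_right hTε)) hφ0 (fun t ht => hφ' t ⟨ht.1, ht.2.trans_le hTε⟩) hleT
  have hκbound := two_scale_bound_le hK hκ hcK hε hε₀ hRsmall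
  have hφκ : ∀ t ∈ Icc 0 tε, φ t < κ :=
    forall_lt_of_forall_lt_of_isCompact isCompact_Icc hφ fun T hT hpast =>
      (hbound T hT fun t ht => hle t ⟨ht.1, ht.2.trans_le hT.2⟩ fun s hs =>
        (hpast s ⟨hs.1, (hs.2.trans ht.2.le).trans hT.2⟩ (hs.2.trans_lt ht.2)).le).trans_le hκbound
  exact ⟨fun T hT => hbound T hT fun t ht => hle t ⟨ht.1, ht.2.trans_le hT.2⟩ fun s hs =>
    (hφκ s ⟨hs.1, (hs.2.trans ht.2.le).trans hT.2⟩).le, hφκ⟩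

/-- Two-scale Gronwall lemma (abstract form of the paper's Lemma 4.2). -/
theorem two_scale_gronwall
    (K κ c : ℝ) (hK : 0 < K) (hκ : κ ∈ Ioo (0:ℝ) 1) (hc : c ∈ Ioo 0 (1 / K))
    (N : ℝ → ℝ) (hN0 : ∀ s, 0 ≤ s → 0 ≤ N s) (hNint : IntegrableOn N (Ici 0))
    (A : ℝ) (hA : A = ∫ s in Ici (0:ℝ), N s)
    (ε₀ : ℝ) (hε₀ : ε₀ = ((κ * K / 2) * Real.exp (-K * A)) ^ (1 / (1 - c * K)))
    (ε : ℝ) (hε : 0 < ε) (hεε₀ : ε ≤ ε₀) (hε1 : ε < 1)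
    (tε : ℝ) (htε : tε = c * ε * Real.log (1 / ε))
    (r : ℝ → ℝ) (hr0 : ∀ s, 0 ≤ s → 0 ≤ r s) (hrint : IntegrableOn r (Ici 0))
    (R : ℝ) (hR : R = ∫ s in Ici (0:ℝ), r s)
    (hRsmall : R ≤ (κ / 2) * (ε ^ (1 + c * K) / K) * Real.exp (-K * A))
    (φ φ' : ℝ → ℝ)
    (hφc : ContinuousOn φ (Icc 0 tε))
    (hφ0 : ∀ t ∈ Icc 0 tε, 0 ≤ φ t)
    (hφini : φ 0 = 0)
    (hφd : ∀ t ∈ Ioo 0 tε, HasDerivAt φ (φ' t) t)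
    (hineq : ∀ t ∈ Ioo 0 tε, (∀ s ∈ Icc 0 t, φ s ≤ κ) →
      ε * φ' t ≤ K * ((1 + N (t / ε)) * φ t + t + r t)) :
    (∀ t ∈ Icc 0 tε,
        φ t ≤ (ε ^ (1 - c * K) / K + K * R * ε ^ (-1 - c * K)) * Real.exp (K * A))
      ∧ (∀ t ∈ Icc 0 tε, φ t ≤ κ) := by
  have h := two_scale_gronwall_general K κ c hK hκ.1 hc.2 N hN0 hNint A hA ε hε (hε₀ ▸ hεε₀) r hr0
    hrint R hR hRsmall tε htε φ φ' hφc hφini.le (fun t ht => (hφd t ht).hasDerivWithinAt) hineq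
  exact ⟨fun t ht => (h.1 t ht).le, fun t ht => (h.2 t ht).le⟩
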